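/- The 7-dimensional nilpotent Lie algebra g_{1.17} is an Einstein nilradical of eigenvalue type (1<2<3<4<5; 2,1,2,1,1): there exists μ̃ in the GL_7(ℝ)-orbit of its law such that m(μ̃) = c I + φ with c < 0 and φ a symmetric derivation of μ̃ whose eigenvalues, rescaled to coprime positive integers, are 1,1,2,3,3,4,5. -/

import Mathlib

open Matrix BigOperators Polynomial

noncomputable section

abbrev Law (n : ℕ) := (Fin n → ℝ) → (Fin n → ℝ) → (Fin n → ℝ)

/-- `i`-th canonical basis vector of `ℝ^n`. -/
def bVec {n : ℕ} (i : Fin n) : Fin n → ℝ := Pi.single i 1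

def IsBilin {n : ℕ} (μ : Law n) : Prop :=
  (∀ X, IsLinearMap ℝ (μ X)) ∧ (∀ Y, IsLinearMap ℝ (fun X => μ X Y))

def IsSkew {n : ℕ} (μ : Law n) : Prop := ∀ X Y, μ X Y = - μ Y X

def IsJacobi {n : ℕ} (μ : Law n) : Prop :=
  ∀ X Y Z, μ (μ X Y) Z + μ (μ Y Z) X + μ (μ Z X) Y = 0

def IsLieLaw {n : ℕ} (μ : Law n) : Prop := IsBilin μ ∧ IsSkew μ ∧ IsJacobi μ

/-- lower central series of the law `μ`. -/
def lcs {n : ℕ} (μ : Law n) : ℕ → Submodule ℝ (Fin n → ℝ)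
  | 0 => ⊤
  | k + 1 => Submodule.span ℝ {z | ∃ x y, y ∈ lcs μ k ∧ z = μ x y}

def IsNilpotentLaw {n : ℕ} (μ : Law n) : Prop :=
  IsLieLaw μ ∧ ∃ k, lcs μ k = ⊥

/-- the action of `GL_n(ℝ)` on laws: `(g·μ)(X,Y) = g μ(g⁻¹X, g⁻¹Y)`. -/
def act {n : ℕ} (g : GL (Fin n) ℝ) (μ : Law n) : Law n :=
  fun X Y =>
    (g : Matrix (Fin n) (Fin n) ℝ).mulVec
      (μ (((g⁻¹ : GL (Fin n) ℝ) : Matrix (Fin n) (Fin n) ℝ).mulVec X)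
         (((g⁻¹ : GL (Fin n) ℝ) : Matrix (Fin n) (Fin n) ℝ).mulVec Y))

def IsDerivation {n : ℕ} (μ : Law n) (ψ : Matrix (Fin n) (Fin n) ℝ) : Prop :=
  ∀ X Y, ψ.mulVec (μ X Y) = μ (ψ.mulVec X) Y + μ X (ψ.mulVec Y)

/-- the unnormalized moment map `m(μ) = 4 Ric_μ`, as a matrix in the canonical basis. -/
def momentMap {n : ℕ} (μ : Law n) : Matrix (Fin n) (Fin n) ℝ :=
  Matrix.of fun k l =>
    4 * (-(1/2) * ∑ i, ∑ j, μ (bVec k) (bVec i) j * μ (bVec l) (bVec i) j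
      + (1/4) * ∑ i, ∑ j, μ (bVec i) (bVec j) k * μ (bVec i) (bVec j) l)

def IsEinsteinNilradical {n : ℕ} (μ : Law n) : Prop :=
  ∃ g : GL (Fin n) ℝ, ∃ c : ℝ, ∃ φ : Matrix (Fin n) (Fin n) ℝ,
    c < 0 ∧ φ.IsSymm ∧ IsDerivation (act g μ) φ ∧
    momentMap (act g μ) = c • (1 : Matrix (Fin n) (Fin n) ℝ) + φ

/-- build a (bilinear) law from a table `c` of structure constants on the
canonical basis, antisymmetrized: `[e_i, e_j] = c i j - c j i`. -/
def mkLaw {n : ℕ} (c : Fin n → Fin n → Fin n → ℝ) : Law n :=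
  fun X Y k => ∑ i, ∑ j, X i * Y j * (c i j k - c j i k)

/-- structure constants of the law `μ̃` from Example 1 (a nilsoliton law
isomorphic to `g_{1.17}`). -/
def cTilde : Fin 7 → Fin 7 → Fin 7 → ℝ := fun i j =>
  if i = 0 ∧ j = 1 then Pi.single 2 (Real.sqrt 611 / 94)
  else if i = 0 ∧ j = 2 then Pi.single 4 (Real.sqrt 235 / 47)
  else if i = 0 ∧ j = 4 then Pi.single 5 (Real.sqrt 611 / 94)
  else if i = 1 ∧ j = 2 then Pi.single 3 (Real.sqrt 235 / 94)
  else if i = 1 ∧ j = 3 then Pi.single 5 (Real.sqrt 611 / 94)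
  else if i = 1 ∧ j = 5 then Pi.single 6 (Real.sqrt 705 / 94)
  else if i = 2 ∧ j = 4 then Pi.single 6 (-(Real.sqrt 705 / 94))
  else 0

/-- the law `μ̃`. -/
def lawTilde : Law 7 := mkLaw cTilde


/-- structure constants of `g_{1.17}`. -/
def c117 : Fin 7 → Fin 7 → Fin 7 → ℝ := fun i j =>
  if i = 0 ∧ j = 1 then Pi.single 2 1
  else if i = 0 ∧ j = 2 then Pi.single 3 1
  else if i = 0 ∧ j = 3 then Pi.single 5 1
  else if i = 0 ∧ j = 5 then Pi.single 6 1
  else if i = 1 ∧ j = 2 then Pi.single 4 1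
  else if i = 1 ∧ j = 4 then Pi.single 5 1
  else if i = 1 ∧ j = 5 then Pi.single 6 1
  else if i = 2 ∧ j = 3 then Pi.single 6 (-1)
  else if i = 2 ∧ j = 4 then Pi.single 6 1
  else 0

/-- the Lie algebra law of `g_{1.17}`. -/
def law117 : Law 7 := mkLaw c117


/-!
In the basis `e₁ - e₂, e₁ + e₂, 2e₃, 2(e₄ + e₅), 2(e₄ - e₅), 4e₆, 8e₇` every nonzero structure
constant of `g_{1.17}` is `±1`, and a diagonal rescaling turns this law into `μ̃`, which therefore
lies in the orbit. The canonical basis is nice for `μ̃`, so `m(μ̃)` is diagonal and only its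
diagonal entries `∑ (μ̃_{ij}^k)² - 2 ∑ (μ̃_{ki}^j)²` need to be computed; they give
`m(μ̃) = -(65/94) I + (19/94) diag(1, 1, 2, 3, 3, 4, 5)`. The last matrix is a derivation since
these weights grade `μ̃`.
-/

section General

variable {n : ℕ}

theorem act_eq_of_mulVec_eq {g : GL (Fin n) ℝ} {μ ν : Law n}
    (h : ∀ X Y, g.val *ᵥ μ X Y = ν (g.val *ᵥ X) (g.val *ᵥ Y)) : act g μ = ν := by
  funext X Y
  simp only [act, h, mulVec_mulVec, ← Units.val_mul, mul_inv_cancel, Units.val_one, one_mulVec]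

theorem act_mul (g h : GL (Fin n) ℝ) (μ : Law n) : act (g * h) μ = act g (act h μ) := by
  funext X Y
  simp only [act, _root_.mul_inv_rev, Units.val_mul, mulVec_mulVec]

theorem act_inv_act (g : GL (Fin n) ℝ) (μ : Law n) : act g⁻¹ (act g μ) = μ := by
  rw [← act_mul, inv_mul_cancel]
  funext X Y
  simp only [act, inv_one, Units.val_one, one_mulVec]

theorem mkLaw_bVec (c : Fin n → Fin n → Fin n → ℝ) (i j k : Fin n) :
    mkLaw c (bVec i) (bVec j) k = c i j k - c j i k := by
  simp [mkLaw, bVec, Pi.single_apply]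

theorem mulVec_diagonal_mkLaw {c c' : Fin n → Fin n → Fin n → ℝ} {d : Fin n → ℝ}
    (h : ∀ i j k, d k * c i j k = d i * d j * c' i j k) (X Y : Fin n → ℝ) :
    diagonal d *ᵥ mkLaw c X Y = mkLaw c' (diagonal d *ᵥ X) (diagonal d *ᵥ Y) := by
  funext k
  simp only [mulVec_diagonal, mkLaw, Finset.mul_sum]
  refine Finset.sum_congr rfl fun i _ => Finset.sum_congr rfl fun j _ => ?_
  linear_combination X i * Y j * (h i j k - h j i k)

theorem exists_act_mkLaw_eq_of_diagonal {c c' : Fin n → Fin n → Fin n → ℝ} {d : Fin n → ℝ}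
    (hd : ∀ i, d i ≠ 0) (h : ∀ i j k, d k * c i j k = d i * d j * c' i j k) :
    ∃ g : GL (Fin n) ℝ, act g (mkLaw c) = mkLaw c' :=
  have hdet : (diagonal d).det ≠ 0 := by
    rw [det_diagonal]
    exact Finset.prod_ne_zero_iff.mpr fun i _ => hd i
  ⟨GeneralLinearGroup.mkOfDetNeZero (diagonal d) hdet,
    act_eq_of_mulVec_eq (mulVec_diagonal_mkLaw h)⟩

theorem isDerivation_diagonal_mkLaw {c : Fin n → Fin n → Fin n → ℝ} {d : Fin n → ℝ}
    (h : ∀ i j k, c i j k ≠ 0 → d k = d i + d j) : IsDerivation (mkLaw c) (diagonal d) := by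
  have hc (i j k) : d k * c i j k = (d i + d j) * c i j k := by
    by_cases h0 : c i j k = 0
    · rw [h0, mul_zero, mul_zero]
    · rw [h i j k h0]
  intro X Y
  funext k
  simp only [mulVec_diagonal, mkLaw, Pi.add_apply, Finset.mul_sum, ← Finset.sum_add_distrib]
  refine Finset.sum_congr rfl fun i _ => Finset.sum_congr rfl fun j _ => ?_
  linear_combination X i * Y j * (hc i j k - hc j i k)

/-- The canonical basis is nice for `μ` in the sense of Nikolayevsky: every `μ(e_i, e_j)` is a
multiple of a single basis vector, and the brackets `μ(e_i, e_j)`, `μ(e_{i'}, e_j)` with `i ≠ i'`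
have no basis vector in common. -/
structure HasNiceBasis (μ : Law n) : Prop where
  right_unique : ∀ {i j k k'}, μ (bVec i) (bVec j) k ≠ 0 → μ (bVec i) (bVec j) k' ≠ 0 → k = k'
  left_unique : ∀ {i i' j k}, μ (bVec i) (bVec j) k ≠ 0 → μ (bVec i') (bVec j) k ≠ 0 → i = i'

theorem HasNiceBasis.momentMap_eq_diagonal {μ : Law n} (hμ : HasNiceBasis μ) :
    momentMap μ = diagonal fun k =>
      ∑ i, ∑ j, (μ (bVec i) (bVec j) k) ^ 2 - 2 * ∑ i, ∑ j, (μ (bVec k) (bVec i) j) ^ 2 := by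
  ext k l
  rcases eq_or_ne k l with rfl | hkl
  · simp only [momentMap, of_apply, diagonal_apply_eq, pow_two]
    ring
  · have source_orthogonal (i j) : μ (bVec k) (bVec i) j * μ (bVec l) (bVec i) j = 0 := by
      by_contra h
      exact hkl (hμ.left_unique (left_ne_zero_of_mul h) (right_ne_zero_of_mul h))
    have target_orthogonal (i j) : μ (bVec i) (bVec j) k * μ (bVec i) (bVec j) l = 0 := by
      by_contra h
      exact hkl (hμ.right_unique (left_ne_zero_of_mul h) (right_ne_zero_of_mul h))
    simp [momentMap, source_orthogonal, target_orthogonal, hkl]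

end General

/-- The triples `(i, j, k)` such that, for the law `μ̃`, the bracket `[e_i, e_j]` is a nonzero
multiple of `e_k`; closed under exchanging `i` and `j`. -/
def tildeSupport : Finset (Fin 7 × Fin 7 × Fin 7) :=
  {(0, 1, 2), (0, 2, 4), (0, 4, 5), (1, 2, 3), (1, 3, 5), (1, 5, 6), (2, 4, 6),
    (1, 0, 2), (2, 0, 4), (4, 0, 5), (2, 1, 3), (3, 1, 5), (5, 1, 6), (4, 2, 6)}

/-- The eigenvalues of the nilsoliton derivation, up to scale. -/
def weight : Fin 7 → ℝ := ![1, 1, 2, 3, 3, 4, 5]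

theorem mem_tildeSupport_of_cTilde_ne_zero {i j k : Fin 7} (h : cTilde i j k ≠ 0) :
    (i, j, k) ∈ tildeSupport := by
  unfold cTilde at h
  split_ifs at h <;> simp_all [Pi.single_apply, tildeSupport]

theorem mem_tildeSupport_of_lawTilde_ne_zero {i j k : Fin 7}
    (h : lawTilde (bVec i) (bVec j) k ≠ 0) : (i, j, k) ∈ tildeSupport := by
  have swap_mem : ∀ s ∈ tildeSupport, (s.2.1, s.1, s.2.2) ∈ tildeSupport := by decide +kernel
  contrapose! h
  rw [lawTilde, mkLaw_bVec, not_imp_comm.mp mem_tildeSupport_of_cTilde_ne_zero h,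
    not_imp_comm.mp mem_tildeSupport_of_cTilde_ne_zero (mt (swap_mem (j, i, k)) h), sub_zero]

theorem hasNiceBasis_lawTilde : HasNiceBasis lawTilde where
  right_unique h h' := by
    have unique : ∀ s ∈ tildeSupport, ∀ t ∈ tildeSupport,
        s.1 = t.1 → s.2.1 = t.2.1 → s.2.2 = t.2.2 := by decide +kernel
    exact unique _ (mem_tildeSupport_of_lawTilde_ne_zero h)
      _ (mem_tildeSupport_of_lawTilde_ne_zero h') rfl rfl
  left_unique h h' := by
    have unique : ∀ s ∈ tildeSupport, ∀ t ∈ tildeSupport,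
        s.2.1 = t.2.1 → s.2.2 = t.2.2 → s.1 = t.1 := by decide +kernel
    exact unique _ (mem_tildeSupport_of_lawTilde_ne_zero h)
      _ (mem_tildeSupport_of_lawTilde_ne_zero h') rfl rfl

theorem weight_eq_add {s : Fin 7 × Fin 7 × Fin 7} (hs : s ∈ tildeSupport) :
    weight s.2.2 = weight s.1 + weight s.2.1 := by
  fin_cases hs <;> simp [weight] <;> norm_num

theorem isDerivation_lawTilde (r : ℝ) : IsDerivation lawTilde (r • diagonal weight) := by
  rw [← diagonal_smul]
  refine isDerivation_diagonal_mkLaw fun i j k h => ?_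
  simp only [Pi.smul_apply, weight_eq_add (mem_tildeSupport_of_cTilde_ne_zero h), smul_add]

theorem momentMap_lawTilde :
    momentMap lawTilde = (-65 / 94 : ℝ) • (1 : Matrix (Fin 7) (Fin 7) ℝ) +
      (19 / 94 : ℝ) • diagonal weight := by
  rw [hasNiceBasis_lawTilde.momentMap_eq_diagonal, smul_one_eq_diagonal, ← diagonal_smul,
    diagonal_add]
  congr 1
  funext k
  simp only [lawTilde, mkLaw_bVec, Fin.sum_univ_seven]
  fin_cases k <;> simp [cTilde, weight, div_pow] <;> norm_num

/-- The structure constants of `g_{1.17}` in the basis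
`e_1 - e_2, e_1 + e_2, 2e_3, 2(e_4 + e_5), 2(e_4 - e_5), 4e_6, 8e_7`, the `e_i` being numbered
from 1 as on paper. The nonzero entries are `±1` and lie where `cTilde` is nonzero. -/
def cNice : Fin 7 → Fin 7 → Fin 7 → ℝ := fun i j =>
  if i = 0 ∧ j = 1 then Pi.single 2 1
  else if i = 0 ∧ j = 2 then Pi.single 4 1
  else if i = 0 ∧ j = 4 then Pi.single 5 1
  else if i = 1 ∧ j = 2 then Pi.single 3 1
  else if i = 1 ∧ j = 3 then Pi.single 5 1
  else if i = 1 ∧ j = 5 then Pi.single 6 1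
  else if i = 2 ∧ j = 4 then Pi.single 6 (-1)
  else 0

/-- The matrix whose columns are the basis of `cNice`. -/
def niceBasisMatrix : Matrix (Fin 7) (Fin 7) ℝ :=
  !![ 1, 1, 0, 0, 0, 0, 0;
     -1, 1, 0, 0, 0, 0, 0;
      0, 0, 2, 0, 0, 0, 0;
      0, 0, 0, 2, 2, 0, 0;
      0, 0, 0, 2, -2, 0, 0;
      0, 0, 0, 0, 0, 4, 0;
      0, 0, 0, 0, 0, 0, 8]

theorem det_niceBasisMatrix : niceBasisMatrix.det = -1024 := by
  simp [niceBasisMatrix, det_succ_row_zero, Fin.sum_univ_succ, Fin.succAbove]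
  norm_num

theorem law117_apply (X Y : Fin 7 → ℝ) : law117 X Y =
    ![0, 0, X 0 * Y 1 - X 1 * Y 0, X 0 * Y 2 - X 2 * Y 0, X 1 * Y 2 - X 2 * Y 1,
      (X 0 * Y 3 - X 3 * Y 0) + (X 1 * Y 4 - X 4 * Y 1),
      (X 0 * Y 5 - X 5 * Y 0) + (X 1 * Y 5 - X 5 * Y 1) - (X 2 * Y 3 - X 3 * Y 2)
        + (X 2 * Y 4 - X 4 * Y 2)] := by
  funext k
  fin_cases k <;> simp [law117, mkLaw, c117, Fin.sum_univ_seven] <;> ring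

theorem mkLaw_cNice_apply (X Y : Fin 7 → ℝ) : mkLaw cNice X Y =
    ![0, 0, X 0 * Y 1 - X 1 * Y 0, X 1 * Y 2 - X 2 * Y 1, X 0 * Y 2 - X 2 * Y 0,
      (X 0 * Y 4 - X 4 * Y 0) + (X 1 * Y 3 - X 3 * Y 1),
      (X 1 * Y 5 - X 5 * Y 1) - (X 2 * Y 4 - X 4 * Y 2)] := by
  funext k
  fin_cases k <;> simp [mkLaw, cNice, Fin.sum_univ_seven] <;> ring

theorem exists_act_law117_eq_mkLaw_cNice :
    ∃ g : GL (Fin 7) ℝ, act g law117 = mkLaw cNice := by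
  let P : GL (Fin 7) ℝ := .mkOfDetNeZero niceBasisMatrix (by norm_num [det_niceBasisMatrix])
  have hP : act P (mkLaw cNice) = law117 := act_eq_of_mulVec_eq fun X Y => by
    change niceBasisMatrix *ᵥ _ = law117 (niceBasisMatrix *ᵥ X) (niceBasisMatrix *ᵥ Y)
    rw [law117_apply, mkLaw_cNice_apply]
    funext k
    fin_cases k <;> simp [niceBasisMatrix, mulVec, dotProduct, Fin.sum_univ_seven] <;> ring
  exact ⟨P⁻¹, by rw [← hP, act_inv_act]⟩

/-- The diagonal of the rescaling that carries `cNice` to `cTilde`, where `α`, `β`, `γ` are the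
entries `(0, 1, 2)`, `(1, 2, 3)`, `(1, 5, 6)` of `cTilde`. The entry `(0, 2, 4)` is `2 * β`, so the
two brackets onto `e_5` (counted from 0) force `d 1 ^ 2 = 2 * d 0 ^ 2`; normalizing `d 0 = 1`
determines the other entries. -/
def niceScaling (α β γ : ℝ) : Fin 7 → ℝ :=
  ![1, √2, √2 * α, 2 * α * β, 2 * √2 * α * β, 2 * √2 * α ^ 2 * β, 4 * α ^ 2 * β * γ]

theorem exists_act_mkLaw_cNice_eq_lawTilde :
    ∃ g : GL (Fin 7) ℝ, act g (mkLaw cNice) = lawTilde := by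
  refine exists_act_mkLaw_eq_of_diagonal (d := niceScaling (√611 / 94) (√235 / 94) (√705 / 94))
    (fun i => ?_) fun i j k => ?_
  · fin_cases i <;> simp [niceScaling]
  · unfold cNice cTilde
    have : √2 ^ 2 = (2 : ℝ) := Real.sq_sqrt zero_le_two
    split_ifs <;> simp_all [niceScaling, Pi.single_apply] <;> grind

theorem exists_act_law117_eq_lawTilde : ∃ g : GL (Fin 7) ℝ, act g law117 = lawTilde := by
  obtain ⟨g, hg⟩ := exists_act_law117_eq_mkLaw_cNice
  obtain ⟨d, hd⟩ := exists_act_mkLaw_cNice_eq_lawTilde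
  exact ⟨d * g, by rw [act_mul, hg, hd]⟩

/-- `g_{1.17}` is an Einstein nilradical of eigenvalue type
`(1<2<3<4<5; 2,1,2,1,1)`. -/
theorem stmt_6 :
    ∃ g : GL (Fin 7) ℝ, ∃ c : ℝ, ∃ φ : Matrix (Fin 7) (Fin 7) ℝ,
      c < 0 ∧ φ.IsSymm ∧ IsDerivation (act g law117) φ ∧
      momentMap (act g law117) = c • (1 : Matrix (Fin 7) (Fin 7) ℝ) + φ ∧
      ∃ a : ℝ, 0 < a ∧
        (a • φ).charpoly =
          (Polynomial.X - Polynomial.C (1 : ℝ)) ^ 2 *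
          (Polynomial.X - Polynomial.C (2 : ℝ)) *
          (Polynomial.X - Polynomial.C (3 : ℝ)) ^ 2 *
          (Polynomial.X - Polynomial.C (4 : ℝ)) *
          (Polynomial.X - Polynomial.C (5 : ℝ)) := by
  obtain ⟨g, hg⟩ := exists_act_law117_eq_lawTilde
  refine ⟨g, -65 / 94, (19 / 94 : ℝ) • diagonal weight, by norm_num,
    (isSymm_diagonal weight).smul _, ?_, ?_, 94 / 19, by norm_num, ?_⟩
  · exact hg ▸ isDerivation_lawTilde _
  · exact hg ▸ momentMap_lawTilde
  · have rescale : (94 / 19 : ℝ) • (19 / 94 : ℝ) • diagonal weight = diagonal weight := by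
      norm_num [smul_smul]
    rw [rescale, charpoly_diagonal]
    simp only [weight, Fin.prod_univ_seven, cons_val]
    ring
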